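/- Construction II with d = 1, m-fold multiple of the second graph. For a positive integer m, let D be the directed graph on the vertex set V × {1, …, m}, where V = {(i, B) : i ∈ P, B ∈ 𝓑_i}, with adjacency ((i, B), c) → ((j, B′), c′) if and only if either i ∈ B′, or i = j and (B, c) ≠ (B′, c′). Then D is a directed strongly regular graph with parameters (v, k, t, λ, μ) = (m(ls² + s), m(ls + s) − 1, m(l + s) − 1, m(l + s) − 2, m(l + 1)). -/

import Mathlib

/-- A loopless directed graph (given by its adjacency relation `Adj` on the vertex
type `V`) is a *directed strongly regular graph* with parameters `(v, k, t, lam, mu)`: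
the vertex set is finite of size `v`; every vertex has exactly `k` out-neighbors and
exactly `k` in-neighbors; every vertex has exactly `t` out-neighbors that are also
in-neighbors; and for distinct vertices `x, y`, the number of directed paths of
length two from `x` to `y` is `lam` if `x → y` and `mu` otherwise. -/
def IsDSRG {V : Type} (Adj : V → V → Prop) (v k t lam mu : ℕ) : Prop :=
  Finite V ∧
  (∀ x : V, ¬ Adj x x) ∧
  Nat.card V = v ∧
  (∀ x : V, Nat.card {y : V // Adj x y} = k) ∧
  (∀ x : V, Nat.card {y : V // Adj y x} = k) ∧
  (∀ x : V, Nat.card {y : V // Adj x y ∧ Adj y x} = t) ∧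
  (∀ x y : V, x ≠ y → Adj x y → Nat.card {z : V // Adj x z ∧ Adj z y} = lam) ∧
  (∀ x y : V, x ≠ y → ¬ Adj x y → Nat.card {z : V // Adj x z ∧ Adj z y} = mu)

/-!
Adding a loop at every vertex turns the adjacency into the relation `i ∈ {j} ∪ B'` between
`(i, B)` and `(j, B')`, in which the colors play no role. A path of length two from `(i, B)` to
`(j, B')` in it is a choice of a point `h ∈ {j} ∪ B'` and a block `C` at `h` with
`i ∈ {h} ∪ C`. There are `s` such `C` if `h = i`, and exactly one otherwise, so summing over the
`l + 1` points `h` gives `l + s` or `l + 1` paths according to whether `i ∈ {j} ∪ B'`. Passing to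
`m` colors multiplies all counts by `m`, and removing the loops subtracts the paths through the
two end points.
-/

/-- A directed strongly regular graph with a loop added at every vertex: for the adjacency matrix
`N` of `R` this says `N J = J N = k J` and `N² = a N + b (J - N)`, with ones on the diagonal of `N`.
Unlike for `IsDSRG`, the path counts include the case where the two end points agree. -/
structure IsLoopedDSRG {V : Type*} (R : V → V → Prop) (v k a b : ℕ) : Prop where
  refl : ∀ x, R x x
  card_vertices : Nat.card V = v
  card_out : ∀ x, Nat.card {y // R x y} = k
  card_in : ∀ x, Nat.card {y // R y x} = k
  card_path_of_rel : ∀ x y, R x y → Nat.card {z // R x z ∧ R z y} = a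
  card_path_of_not_rel : ∀ x y, ¬ R x y → Nat.card {z // R x z ∧ R z y} = b

lemma card_subtype_and_ne {V : Type*} {p : V → Prop} {a : V} (ha : p a) :
    Nat.card {z // p z ∧ z ≠ a} = Nat.card {z // p z} - 1 :=
  Set.ncard_sdiff_singleton_of_mem (s := {z | p z}) ha

lemma card_subtype_fst {V : Type*} (ι : Type*) (p : V → Prop) :
    Nat.card {z : V × ι // p z.1} = Nat.card ι * Nat.card {x // p x} := by
  rw [Nat.card_congr Equiv.prodSubtypeFstEquivSubtypeProd, Nat.card_prod, mul_comm]

namespace IsLoopedDSRG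

variable {v k a b : ℕ}

theorem prod {V : Type*} {R : V → V → Prop} (h : IsLoopedDSRG R v k a b) (ι : Type*) :
    IsLoopedDSRG (fun x y : V × ι ↦ R x.1 y.1)
      (Nat.card ι * v) (Nat.card ι * k) (Nat.card ι * a) (Nat.card ι * b) where
  refl x := h.refl x.1
  card_vertices := by rw [Nat.card_prod, h.card_vertices, mul_comm]
  card_out x := by rw [card_subtype_fst ι (R x.1 ·), h.card_out]
  card_in x := by rw [card_subtype_fst ι (R · x.1), h.card_in]
  card_path_of_rel x y hxy := by
    rw [card_subtype_fst ι fun z ↦ R x.1 z ∧ R z y.1, h.card_path_of_rel _ _ hxy]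
  card_path_of_not_rel x y hxy := by
    rw [card_subtype_fst ι fun z ↦ R x.1 z ∧ R z y.1, h.card_path_of_not_rel _ _ hxy]

theorem isDSRG {V : Type} [Finite V] {R Adj : V → V → Prop} (h : IsLoopedDSRG R v k a b)
    (hAdj : ∀ x y, Adj x y ↔ R x y ∧ x ≠ y) :
    IsDSRG Adj v (k - 1) (a - 1) (a - 2) b := by
  simp only [IsDSRG, hAdj]
  refine ⟨inferInstance, fun x hx ↦ hx.2 rfl, h.card_vertices, fun x ↦ ?outdegree,
    fun x ↦ ?indegree, fun x ↦ ?reciprocal, fun x y hne hxy ↦ ?adj, fun x y hne hxy ↦ ?nonadj⟩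
  case outdegree =>
    rw [← h.card_out x, ← card_subtype_and_ne (h.refl x)]
    simp only [ne_comm]
  case indegree =>
    rw [← h.card_in x, ← card_subtype_and_ne (p := (R · x)) (h.refl x)]
  case reciprocal =>
    rw [← h.card_path_of_rel x x (h.refl x), ← card_subtype_and_ne ⟨h.refl x, h.refl x⟩]
    exact Nat.card_congr (Equiv.subtypeEquivRight fun z ↦ by grind)
  case adj =>
    rw [← h.card_path_of_rel x y hxy.1, ← Nat.sub_sub _ 1 1,
      ← card_subtype_and_ne ⟨h.refl x, hxy.1⟩,
      ← card_subtype_and_ne ⟨⟨hxy.1, h.refl y⟩, hne.symm⟩]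
    exact Nat.card_congr (Equiv.subtypeEquivRight fun z ↦ by grind)
  case nonadj =>
    have hR : ¬ R x y := fun hRxy ↦ hxy ⟨hRxy, hne⟩
    rw [← h.card_path_of_not_rel x y hR]
    exact Nat.card_congr (Equiv.subtypeEquivRight fun z ↦ by grind)

end IsLoopedDSRG

/-- The vertices `(i, B)` of Construction II: a block `B` of the family `𝓑 i` together with its
base point `i`. -/
abbrev PointedBlock {α : Type*} (𝓑 : α → Finset (Finset α)) : Type _ :=
  {x : α × Finset α // x.2 ∈ 𝓑 x.1}

namespace PointedBlock

variable {α : Type*} {𝓑 : α → Finset (Finset α)}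

/-- The base point `i` of `(i, B)`. -/
abbrev point (x : PointedBlock 𝓑) : α := x.1.1

/-- The block `B` of `(i, B)`. -/
abbrev block (x : PointedBlock 𝓑) : Finset α := x.1.2

lemma card_point_mem_and (𝓑 : α → Finset (Finset α)) (T : Finset α) (q : α → Finset α → Prop)
    [∀ h, DecidablePred (q h)] :
    Nat.card {z : PointedBlock 𝓑 // z.point ∈ T ∧ q z.point z.block} =
      ∑ h ∈ T, ((𝓑 h).filter (q h)).card := by
  let toSigma : {z : PointedBlock 𝓑 // z.point ∈ T ∧ q z.point z.block} ≃
      T.sigma fun h ↦ (𝓑 h).filter (q h) :=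
    { toFun z := ⟨⟨z.1.point, z.1.block⟩, by simpa using ⟨z.2.1, z.1.2, z.2.2⟩⟩
      invFun y := ⟨⟨(y.1.1, y.1.2), by grind⟩, by grind⟩
      left_inv _ := rfl
      right_inv _ := rfl }
  rw [Nat.card_congr toSigma, Nat.card_eq_finsetCard, Finset.card_sigma]

lemma card_point_mem {s : ℕ} (hcard : ∀ i, (𝓑 i).card = s) (T : Finset α) :
    Nat.card {z : PointedBlock 𝓑 // z.point ∈ T} = T.card * s := by
  simpa [hcard] using card_point_mem_and 𝓑 T fun _ _ ↦ True

variable [DecidableEq α]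

/-- The closed block `{i} ∪ B` of `(i, B)`, which governs adjacency once loops are added. -/
abbrev closedBlock (x : PointedBlock 𝓑) : Finset α := insert x.point x.block

lemma adj_iff_mem_closedBlock_and_ne {ι : Type*} {x y : PointedBlock 𝓑 × ι}
    (hy : y.1.point ∉ y.1.block) :
    (x.1.point ∈ y.1.block ∨
        (x.1.point = y.1.point ∧ (x.1.block, x.2) ≠ (y.1.block, y.2))) ↔
      x.1.point ∈ y.1.closedBlock ∧ x ≠ y := by
  obtain ⟨⟨⟨i, B⟩, hB⟩, c⟩ := x
  obtain ⟨⟨⟨j, B'⟩, hB'⟩, c'⟩ := y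
  grind

lemma card_filter_mem_insert_of_ne (hpart : ∀ i x : α, x ≠ i → ∃! B, B ∈ 𝓑 i ∧ x ∈ B)
    {i h : α} (hi : i ≠ h) : ((𝓑 h).filter (i ∈ insert h ·)).card = 1 := by
  obtain ⟨B, hB, huniq⟩ := hpart h i hi
  refine Finset.card_eq_one.2 ⟨B, ?_⟩
  grind

lemma card_point_mem_and_mem_closedBlock_of_notMem
    (hpart : ∀ i x : α, x ≠ i → ∃! B, B ∈ 𝓑 i ∧ x ∈ B) {T : Finset α} {i : α} (hi : i ∉ T) :
    Nat.card {z : PointedBlock 𝓑 // z.point ∈ T ∧ i ∈ z.closedBlock} = T.card := by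
  rw [card_point_mem_and 𝓑 T fun h C ↦ i ∈ insert h C, Finset.card_eq_sum_ones]
  exact Finset.sum_congr rfl fun h hh ↦
    card_filter_mem_insert_of_ne hpart (ne_of_mem_of_not_mem hh hi).symm

lemma card_point_mem_and_mem_closedBlock_of_mem
    (hpart : ∀ i x : α, x ≠ i → ∃! B, B ∈ 𝓑 i ∧ x ∈ B) {T : Finset α} {i : α} (hi : i ∈ T) :
    Nat.card {z : PointedBlock 𝓑 // z.point ∈ T ∧ i ∈ z.closedBlock} =
      T.card - 1 + (𝓑 i).card := by
  rw [← Finset.card_erase_of_mem hi,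
    ← card_point_mem_and_mem_closedBlock_of_notMem hpart (Finset.notMem_erase i T),
    card_point_mem_and 𝓑 T fun h C ↦ i ∈ insert h C,
    card_point_mem_and 𝓑 (T.erase i) fun h C ↦ i ∈ insert h C, ← Finset.sum_erase_add _ _ hi]
  simp

theorem isLoopedDSRG_mem_closedBlock [Fintype α] {l s : ℕ}
    (hcard : Fintype.card α = l * s + 1) (hBs : ∀ i, (𝓑 i).card = s)
    (hBl : ∀ i, ∀ B ∈ 𝓑 i, i ∉ B ∧ B.card = l)
    (hpart : ∀ i x : α, x ≠ i → ∃! B, B ∈ 𝓑 i ∧ x ∈ B) :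
    IsLoopedDSRG (fun x y : PointedBlock 𝓑 ↦ x.point ∈ y.closedBlock)
      (l * s ^ 2 + s) (l * s + s) (l + s) (l + 1) := by
  have hclosed (x : PointedBlock 𝓑) : x.closedBlock.card = l + 1 := by
    rw [Finset.card_insert_of_notMem (hBl _ _ x.2).1, (hBl _ _ x.2).2]
  refine ⟨fun x ↦ Finset.mem_insert_self _ _, ?vertices, fun x ↦ ?outdegree, fun x ↦ ?indegree,
    fun x y hxy ↦ ?path_of_rel, fun x y hxy ↦ ?path_of_not_rel⟩
  case vertices =>
    have hcount := card_point_mem hBs Finset.univ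
    rw [Finset.card_univ, hcard,
      Nat.card_congr (Equiv.subtypeUnivEquiv fun _ ↦ Finset.mem_univ _)] at hcount
    rw [hcount]
    ring
  case outdegree =>
    simpa [hcard, hBs] using
      card_point_mem_and_mem_closedBlock_of_mem hpart (Finset.mem_univ x.point)
  case indegree =>
    rw [card_point_mem hBs, hclosed]
    ring
  case path_of_rel =>
    simp only [and_comm (a := x.point ∈ _)]
    rw [card_point_mem_and_mem_closedBlock_of_mem hpart hxy, hclosed, hBs, Nat.add_sub_cancel]
  case path_of_not_rel =>
    simp only [and_comm (a := x.point ∈ _)]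
    rw [card_point_mem_and_mem_closedBlock_of_notMem hpart hxy, hclosed]

end PointedBlock

/-- **Construction II with `d = 1`, `m`-fold multiple of the second graph.**  Let
`l, s` be positive integers, `P` the finite type `α` with `ls + 1` elements, and
for each `i ∈ P` let `𝓑 i` be a partition of `P \ {i}` into `s` blocks of size
`l`.  The vertices are the pairs `((i, B), c)` with `B ∈ 𝓑 i`, `c ∈ {1, …, m}`,
and `((i,B),c) → ((j,B'),c')` iff `i ∈ B'`, or `i = j` and `(B, c) ≠ (B', c')`.
This directed graph is a DSRG with parameters
`(m(ls² + s), m(ls + s) − 1, m(l + s) − 1, m(l + s) − 2, m(l + 1))`. -/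
theorem constructionII_d_eq_one_D2_multiple_dsrg
    {α : Type} [Fintype α] [DecidableEq α]
    (l s m : ℕ) (hl : 0 < l) (hs : 0 < s) (hm : 0 < m)
    (hcard : Fintype.card α = l * s + 1)
    (𝓑 : α → Finset (Finset α))
    (hBs : ∀ i : α, (𝓑 i).card = s)
    (hBl : ∀ i : α, ∀ B ∈ 𝓑 i, i ∉ B ∧ B.card = l)
    (hBpart : ∀ i x : α, x ≠ i → ∃! B, B ∈ 𝓑 i ∧ x ∈ B) :
    IsDSRG (V := {x : α × Finset α // x.2 ∈ 𝓑 x.1} × Fin m)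
      (fun x y => x.1.1.1 ∈ y.1.1.2 ∨
        (x.1.1.1 = y.1.1.1 ∧ (x.1.1.2, x.2) ≠ (y.1.1.2, y.2)))
      (m * (l * s ^ 2 + s)) (m * (l * s + s) - 1) (m * (l + s) - 1) (m * (l + s) - 2)
      (m * (l + 1)) := by
  have hlooped := (PointedBlock.isLoopedDSRG_mem_closedBlock hcard hBs hBl hBpart).prod (Fin m)
  rw [Nat.card_fin] at hlooped
  exact hlooped.isDSRG fun _ y ↦
    PointedBlock.adj_iff_mem_closedBlock_and_ne (hBl _ _ y.1.2).1
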